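/- (Self-improving property of reverse Hölder inequalities.) Let n ≥ 2, let A ⊆ ℝ^{n+1} be open, let χ₁ > 1 and ĉ ≥ 1, and let g be a measurable function on A with |g|^{2χ₁} locally integrable, such that ( ⨍_{Q_{ρ/2}} |g|^{2χ₁} dx dt )^{1/χ₁} ≤ ĉ ⨍_{Q_ρ} |g|² dx dt holds for every parabolic cylinder Q_ρ with Q_ρ ⊆ A, where Q_{ρ/2} is concentric with Q_ρ. Then, for every σ ∈ (0,2], there exists a constant c depending only on n, σ, χ₁ and ĉ such that ( ⨍_{Q_{ρ/2}} |g|^{2χ₁} dx dt )^{1/(2χ₁)} ≤ c ( ⨍_{Q_ρ} |g|^σ dx dt )^{1/σ} for every parabolic cylinder Q_ρ with Q_ρ ⊆ A. -/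

import Mathlib

open MeasureTheory Set ENNReal

/-- The (backward) parabolic cylinder `Q_R(x₀,t₀) = B(x₀,R) × (t₀ - R², t₀) ⊆ ℝⁿ × ℝ`. -/
def parabolicCylinder (n : ℕ) (x₀ : EuclideanSpace ℝ (Fin n)) (t₀ R : ℝ) :
    Set (EuclideanSpace ℝ (Fin n) × ℝ) :=
  (Metric.ball x₀ R) ×ˢ (Set.Ioo (t₀ - R ^ 2) t₀)

/-- The integral average `⨍_Q |g|^e` (as an extended nonnegative real) of `|g|^e` over `Q`. -/
noncomputable def cylAvg {n : ℕ} (Q : Set (EuclideanSpace ℝ (Fin n) × ℝ))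
    (g : EuclideanSpace ℝ (Fin n) × ℝ → ℝ) (e : ℝ) : ℝ≥0∞ :=
  (volume Q)⁻¹ * ∫⁻ p in Q, ENNReal.ofReal (|g p| ^ e)

/-!
Fix `q > p ≥ σ` and write `Ψ` for the supremum of `|Q_r|^{1/σ} (⨍_{Q_{r/2}} |g|^q)^{1/q}` over all
cylinders `Q_r` contained in a given cylinder `Q`. Covering `Q_{r/2}` by boundedly many cylinders
of radius `r/8`, applying the reverse Hölder inequality on the concentric cylinders of radius
`r/4`, and interpolating `L^p` between `L^σ` and `L^q` gives `Ψ ≤ D ‖g‖_{L^σ(Q)}^{1-θ} Ψ^θ` with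
`θ < 1`. If `|g|^q` is integrable on `Q`, then `Ψ` is finite and can be absorbed. Otherwise `Q` is
exhausted by compactly contained cylinders, its dilates about the centre of `Q_{ρ/2}`; since `D`
does not depend on the cylinder, the inequality passes to the limit.
-/

open Filter Topology
open scoped ProbabilityTheory

theorem le_rpow_mul_of_le_mul_rpow_mul_rpow {X D I : ℝ≥0∞} {θ : ℝ} (hθ : θ < 1) (hX : X ≠ ∞)
    (h : X ≤ D * I ^ (1 - θ) * X ^ θ) : X ≤ D ^ (1 / (1 - θ)) * I := by
  rcases eq_or_ne X 0 with rfl | hX0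
  · exact zero_le
  have hθ' : 0 < 1 - θ := sub_pos.2 hθ
  have hdiv : X ^ (1 - θ) ≤ D * I ^ (1 - θ) := by
    rw [ENNReal.rpow_sub _ _ hX0 hX, ENNReal.rpow_one]
    exact ENNReal.div_le_of_le_mul h
  calc X = (X ^ (1 - θ)) ^ (1 / (1 - θ)) := by
        rw [← ENNReal.rpow_mul, mul_one_div_cancel hθ'.ne', ENNReal.rpow_one]
    _ ≤ (D * I ^ (1 - θ)) ^ (1 / (1 - θ)) := by gcongr
    _ = D ^ (1 / (1 - θ)) * I := by
        rw [ENNReal.mul_rpow_of_nonneg _ _ (by positivity), ← ENNReal.rpow_mul,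
          mul_one_div_cancel hθ'.ne', ENNReal.rpow_one]

theorem mul_mul_rpow_one_sub_mul_rpow (a b c : ℝ≥0∞) {θ : ℝ} (hθ : θ ∈ Icc 0 1) :
    a * (b ^ (1 - θ) * c ^ θ) = (a * b) ^ (1 - θ) * (a * c) ^ θ := by
  have hθ' : 0 ≤ 1 - θ := sub_nonneg.2 hθ.2
  rw [ENNReal.mul_rpow_of_nonneg _ _ hθ', ENNReal.mul_rpow_of_nonneg _ _ hθ.1,
    mul_mul_mul_comm, ← ENNReal.rpow_add_of_nonneg _ _ hθ' hθ.1, sub_add_cancel,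
    ENNReal.rpow_one]

theorem exists_one_div_eq_one_sub_div_add_div {σ p q : ℝ} (hσ : 0 < σ) (hσp : σ ≤ p)
    (hpq : p < q) :
    ∃ θ ∈ Ico (0 : ℝ) 1, 1 / p = (1 - θ) / σ + θ / q := by
  have hσp' : 1 / p ≤ 1 / σ := one_div_le_one_div_of_le hσ hσp
  have hpq' : 1 / q < 1 / p := one_div_lt_one_div_of_lt (hσ.trans_le hσp) hpq
  have hσq : 0 < 1 / σ - 1 / q := by linarith
  refine ⟨(1 / σ - 1 / p) / (1 / σ - 1 / q), ⟨div_nonneg (by linarith) hσq.le,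
    (div_lt_one hσq).2 (by linarith)⟩, ?_⟩
  linear_combination div_mul_cancel₀ (1 / σ - 1 / p) hσq.ne'

section LpNorm

variable {α ε : Type*} [MeasurableSpace α] [TopologicalSpace ε] {μ : Measure α} {g : α → ε}
  {S : Set α} {e : ℝ}

theorem aestronglyMeasurable_cond_of_subset {T : Set α}
    (hg : AEStronglyMeasurable g (μ.restrict S)) (hTS : T ⊆ S) :
    AEStronglyMeasurable g μ[|T] :=
  (hg.mono_set hTS).smul_measure _

variable [ContinuousENorm ε]

theorem eLpNorm'_le_eLpNorm'_rpow_mul_eLpNorm'_rpow {σ p q θ : ℝ} (hσ : 0 < σ) (hp : 0 < p)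
    (hq : 0 < q) (hθ : θ ∈ Icc 0 1) (hpθ : 1 / p = (1 - θ) / σ + θ / q)
    (hg : AEStronglyMeasurable g μ) :
    eLpNorm' g p μ ≤ eLpNorm' g σ μ ^ (1 - θ) * eLpNorm' g q μ ^ θ := by
  obtain ⟨hθ0, hθ1⟩ := hθ
  have ha : 0 ≤ p * (1 - θ) / σ := div_nonneg (mul_nonneg hp.le (sub_nonneg.2 hθ1)) hσ.le
  have hb : 0 ≤ p * θ / q := by positivity
  have hab : p * (1 - θ) / σ + p * θ / q = 1 := by
    rw [mul_div_assoc, mul_div_assoc, ← mul_add, ← hpθ, mul_one_div_cancel hp.ne']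
  have holder : ∫⁻ z, ‖g z‖ₑ ^ p ∂μ ≤
      (∫⁻ z, ‖g z‖ₑ ^ σ ∂μ) ^ (p * (1 - θ) / σ) * (∫⁻ z, ‖g z‖ₑ ^ q ∂μ) ^ (p * θ / q) := by
    refine le_trans (le_of_eq (lintegral_congr fun z => ?_)) (ENNReal.lintegral_mul_norm_pow_le
      (hg.enorm.pow_const σ) (hg.enorm.pow_const q) ha hb hab)
    rw [← ENNReal.rpow_mul, ← ENNReal.rpow_mul, mul_div_cancel₀ _ hσ.ne',
      mul_div_cancel₀ _ hq.ne', ← ENNReal.rpow_add_of_nonneg _ _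
        (mul_nonneg hp.le (sub_nonneg.2 hθ1)) (mul_nonneg hp.le hθ0)]
    congr 1
    ring
  simp only [eLpNorm'_eq_lintegral_enorm]
  refine (ENNReal.rpow_le_rpow holder (one_div_nonneg.2 hp.le)).trans_eq ?_
  rw [ENNReal.mul_rpow_of_nonneg _ _ (one_div_nonneg.2 hp.le)]
  simp only [← ENNReal.rpow_mul]
  congr 2 <;> field_simp

theorem rpow_measure_mul_eLpNorm'_cond (he : 0 ≤ e) (hS₀ : μ S ≠ 0) (hS : μ S ≠ ∞) :
    μ S ^ (1 / e) * eLpNorm' g e μ[|S] = eLpNorm' g e (μ.restrict S) := by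
  rw [ProbabilityTheory.cond, eLpNorm'_smul_measure he, ← mul_assoc,
    ← ENNReal.mul_rpow_of_nonneg _ _ (one_div_nonneg.2 he), ENNReal.mul_inv_cancel hS₀ hS,
    ENNReal.one_rpow, one_mul]

theorem eLpNorm'_cond_le_of_subset_iUnion {ι : Type*} [Fintype ι] {T : ι → Set α} {M : ℝ≥0∞}
    (he : 0 < e) (hcover : S ⊆ ⋃ i, T i) (hT : ∀ i, μ (T i) ≤ μ S)
    (hM : ∀ i, eLpNorm' g e μ[|T i] ≤ M) :
    eLpNorm' g e μ[|S] ≤ (Fintype.card ι : ℝ≥0∞) ^ (1 / e) * M := by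
  have avg_le : ∫⁻ z, ‖g z‖ₑ ^ e ∂μ[|S] ≤ Fintype.card ι * M ^ e := by
    calc ∫⁻ z, ‖g z‖ₑ ^ e ∂μ[|S]
        = (μ S)⁻¹ * ∫⁻ z in S, ‖g z‖ₑ ^ e ∂μ := by
          rw [ProbabilityTheory.cond, lintegral_smul_measure, smul_eq_mul]
      _ ≤ (μ S)⁻¹ * ∑ i, ∫⁻ z in T i, ‖g z‖ₑ ^ e ∂μ := by
          gcongr
          exact (lintegral_mono_set hcover).trans
            ((lintegral_iUnion_le T _).trans_eq (tsum_fintype _))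
      _ ≤ ∑ i, ∫⁻ z, ‖g z‖ₑ ^ e ∂μ[|T i] := by
          rw [Finset.mul_sum]
          refine Finset.sum_le_sum fun i _ => ?_
          rw [ProbabilityTheory.cond, lintegral_smul_measure, smul_eq_mul]
          gcongr ?_⁻¹ * _
          exact hT i
      _ ≤ Fintype.card ι * M ^ e := by
          rw [← nsmul_eq_mul]
          refine Finset.sum_le_card_nsmul _ _ _ fun i _ => ?_
          rw [lintegral_rpow_enorm_eq_rpow_eLpNorm' he]
          gcongr
          exact hM i
  rw [eLpNorm'_eq_lintegral_enorm]
  refine (ENNReal.rpow_le_rpow avg_le (by positivity)).trans_eq ?_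
  rw [ENNReal.mul_rpow_of_nonneg _ _ (by positivity), ← ENNReal.rpow_mul,
    mul_one_div_cancel he.ne', ENNReal.rpow_one]

theorem tendsto_eLpNorm'_cond_iUnion {T : ℕ → Set α} (hmono : Monotone T)
    (h₀ : μ (⋃ k, T k) ≠ 0) (h : μ (⋃ k, T k) ≠ ∞) :
    Tendsto (fun k => eLpNorm' g e μ[|T k]) atTop (𝓝 (eLpNorm' g e μ[|⋃ k, T k])) := by
  simp only [eLpNorm'_eq_lintegral_enorm, ProbabilityTheory.cond, lintegral_smul_measure,
    smul_eq_mul]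
  have hμ : Tendsto (fun k => (μ (T k))⁻¹) atTop (𝓝 (μ (⋃ k, T k))⁻¹) :=
    (tendsto_measure_iUnion_atTop hmono).inv
  have hint : Tendsto (fun k => ∫⁻ z in T k, ‖g z‖ₑ ^ e ∂μ) atTop
      (𝓝 (∫⁻ z in ⋃ k, T k, ‖g z‖ₑ ^ e ∂μ)) := by
    rw [setLIntegral_iUnion_of_directed _ hmono.directed_le]
    exact tendsto_atTop_iSup fun i j hij => lintegral_mono_set (hmono hij)
  exact (ENNReal.Tendsto.mul hμ (.inl (ENNReal.inv_ne_zero.2 h)) hint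
    (.inr (ENNReal.inv_ne_top.2 h₀))).ennrpow_const _

end LpNorm

theorem lintegral_ofReal_abs_rpow_eq {α : Type*} [MeasurableSpace α] (μ : Measure α) {g : α → ℝ}
    {e : ℝ} (he : 0 ≤ e) : ∫⁻ z, ENNReal.ofReal (|g z| ^ e) ∂μ = ∫⁻ z, ‖g z‖ₑ ^ e ∂μ :=
  lintegral_congr fun z => by
    rw [Real.enorm_eq_ofReal_abs, ENNReal.ofReal_rpow_of_nonneg (abs_nonneg _) he]

theorem eLpNorm'_restrict_ne_top_of_isCompact {α : Type*} [TopologicalSpace α]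
    [MeasurableSpace α] {μ : Measure α} {g : α → ℝ} {e : ℝ} {A K : Set α} (he : 0 ≤ e)
    (hg : LocallyIntegrableOn (fun z => |g z| ^ e) A μ) (hKA : K ⊆ A) (hK : IsCompact K) :
    eLpNorm' g e (μ.restrict K) ≠ ∞ := by
  have hfin := (hg.integrableOn_compact_subset hKA hK).lintegral_lt_top
  rw [lintegral_ofReal_abs_rpow_eq _ he] at hfin
  rw [eLpNorm'_eq_lintegral_enorm]
  exact ENNReal.rpow_ne_top_of_nonneg (by positivity) hfin.ne

section ParabolicCylinder

variable {n : ℕ} {x y : EuclideanSpace ℝ (Fin n)} {t s r R k : ℝ}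

theorem parabolicCylinder_subset_parabolicCylinder (hball : dist y x + r ≤ R) (htop : s ≤ t)
    (hbot : t - R ^ 2 ≤ s - r ^ 2) : parabolicCylinder n y s r ⊆ parabolicCylinder n x t R :=
  prod_mono (Metric.ball_subset_ball' (by linarith)) (Ioo_subset_Ioo hbot htop)

theorem parabolicCylinder_subset_of_radius_le (hr : 0 ≤ r) (hrR : r ≤ R) :
    parabolicCylinder n x t r ⊆ parabolicCylinder n x t R :=
  parabolicCylinder_subset_parabolicCylinder (by simpa using hrR) le_rfl (by gcongr)

theorem volume_parabolicCylinder (hr : 0 < r) :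
    volume (parabolicCylinder n x t r) =
      ENNReal.ofReal (r ^ (n + 2)) * volume (Metric.ball (0 : EuclideanSpace ℝ (Fin n)) 1) := by
  rw [parabolicCylinder, Measure.volume_eq_prod, Measure.prod_prod,
    Measure.addHaar_ball_of_pos _ _ hr, Real.volume_Ioo, finrank_euclideanSpace_fin, pow_add,
    ENNReal.ofReal_mul (by positivity), _root_.sub_sub_cancel]
  ring

theorem volume_parabolicCylinder_ne_zero (hr : 0 < r) :
    volume (parabolicCylinder n x t r) ≠ 0 := by
  rw [volume_parabolicCylinder hr]
  exact mul_ne_zero (ENNReal.ofReal_pos.2 (by positivity)).ne'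
    (Metric.measure_ball_pos _ _ one_pos).ne'

theorem volume_parabolicCylinder_ne_top : volume (parabolicCylinder n x t r) ≠ ∞ := by
  rw [parabolicCylinder, Measure.volume_eq_prod, Measure.prod_prod]
  exact ENNReal.mul_ne_top measure_ball_lt_top.ne measure_Ioo_lt_top.ne

theorem volume_parabolicCylinder_mul (hk : 0 < k) (hr : 0 < r) :
    volume (parabolicCylinder n x t (k * r)) =
      ENNReal.ofReal (k ^ (n + 2)) * volume (parabolicCylinder n y s r) := by
  rw [volume_parabolicCylinder (mul_pos hk hr), volume_parabolicCylinder hr, mul_pow,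
    ENNReal.ofReal_mul (by positivity), mul_assoc]

/-- The parabolic dilation `(y, s) ↦ (x + r y, t + r² s)`, which maps `Q_1(0,0)` onto
`Q_r(x,t)`. -/
def parabolicDilation (x : EuclideanSpace ℝ (Fin n)) (t r : ℝ) :
    EuclideanSpace ℝ (Fin n) × ℝ → EuclideanSpace ℝ (Fin n) × ℝ :=
  Prod.map (fun y => x + r • y) fun s => r ^ 2 * s + t

theorem parabolicDilation_image_parabolicCylinder (hr : 0 < r) :
    parabolicDilation x t r '' parabolicCylinder n y s R =
      parabolicCylinder n (x + r • y) (r ^ 2 * s + t) (r * R) := by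
  have hball : (fun z => x + r • z) '' Metric.ball y R = Metric.ball (x + r • y) (r * R) := by
    rw [← image_image (x + ·) (r • ·), image_smul, smul_ball hr.ne', Real.norm_of_nonneg hr.le]
    simp [add_comm]
  rw [parabolicDilation, parabolicCylinder, prodMap_image_prod, hball,
    image_affine_Ioo (by positivity), parabolicCylinder]
  congr 2
  ring

/-- The image of `Q_R(x,t)` under the parabolic dilation of ratio `k` about `(x, t - τ)`. -/
def dilatedParabolicCylinder (x : EuclideanSpace ℝ (Fin n)) (t τ k R : ℝ) :
    Set (EuclideanSpace ℝ (Fin n) × ℝ) :=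
  parabolicCylinder n x (t - (1 - k ^ 2) * τ) (k * R)

theorem dilatedParabolicCylinder_subset {τ k' R : ℝ} (hR : 0 ≤ R) (hτ : τ ∈ Icc 0 (R ^ 2))
    (hk : 0 ≤ k) (hkk' : k ≤ k') :
    dilatedParabolicCylinder x t τ k R ⊆ dilatedParabolicCylinder x t τ k' R := by
  obtain ⟨hτ₀, hτR⟩ := hτ
  have hsq : k ^ 2 ≤ k' ^ 2 := by gcongr
  refine parabolicCylinder_subset_parabolicCylinder (by rw [dist_self, zero_add]; gcongr)
    (by gcongr) ?_
  linarith [mul_le_mul_of_nonneg_right hsq (sub_nonneg.2 hτR)]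

theorem exists_isCompact_dilatedParabolicCylinder_subset {τ R : ℝ} (hR : 0 < R)
    (hτ : τ ∈ Ioo 0 (R ^ 2)) (hk : k ∈ Ioo 0 1) :
    ∃ K, IsCompact K ∧ dilatedParabolicCylinder x t τ k R ⊆ K ∧ K ⊆ parabolicCylinder n x t R := by
  obtain ⟨hτ₀, hτR⟩ := hτ
  have hsq : k ^ 2 < 1 := pow_lt_one₀ hk.1.le hk.2 two_ne_zero
  refine ⟨_, (isCompact_closedBall x (k * R)).prod isCompact_Icc,
    prod_mono Metric.ball_subset_closedBall Ioo_subset_Icc_self,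
    prod_mono (Metric.closedBall_subset_ball (mul_lt_of_lt_one_left hR hk.2))
      (Icc_subset_Ioo ?_ ?_)⟩
  · linarith [mul_lt_mul_of_pos_right hsq (sub_pos.2 hτR)]
  · linarith [mul_lt_mul_of_pos_right hsq hτ₀]

theorem iUnion_dilatedParabolicCylinder {τ R : ℝ} {k : ℕ → ℝ} (hR : 0 ≤ R)
    (hτ : τ ∈ Icc 0 (R ^ 2)) (hk : ∀ j, k j ∈ Icc (0 : ℝ) 1) (hk₁ : Tendsto k atTop (𝓝 1)) :
    ⋃ j, dilatedParabolicCylinder x t τ (k j) R = parabolicCylinder n x t R := by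
  refine subset_antisymm (iUnion_subset fun j => ?_) fun ⟨y, s⟩ ⟨hy, hbot, htop⟩ => ?_
  · simpa [dilatedParabolicCylinder] using
      dilatedParabolicCylinder_subset (x := x) (t := t) hR hτ (hk j).1 (hk j).2
  have hball : ∀ᶠ j in atTop, dist y x < k j * R :=
    (hk₁.mul_const R).eventually_const_lt (by simpa using hy)
  have htop' : Tendsto (fun j => t - (1 - k j ^ 2) * τ) atTop (𝓝 t) := by
    simpa using (((hk₁.pow 2).const_sub 1).mul_const τ).const_sub t
  have hbot' : Tendsto (fun j => t - (1 - k j ^ 2) * τ - (k j * R) ^ 2) atTop (𝓝 (t - R ^ 2)) := by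
    simpa using htop'.sub ((hk₁.mul_const R).pow 2)
  obtain ⟨j, hyj, hbj, htj⟩ := (hball.and
    ((hbot'.eventually_lt_const hbot).and (htop'.eventually_const_lt htop))).exists
  exact mem_iUnion.2 ⟨j, hyj, hbj, htj⟩

theorem exists_finite_Ioo_subset_biUnion_Ioo (ℓ : ℝ) {δ : ℝ} (hδ : 0 < δ) :
    ∃ T ⊆ Ioc (-ℓ) 0, T.Finite ∧ Ioo (-ℓ) 0 ⊆ ⋃ b ∈ T, Ioo (b - δ) b := by
  obtain ⟨T, hT, hfin, hcover⟩ :=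
    Metric.finite_approx_of_totallyBounded (totallyBounded_Ioo (-ℓ) 0) (δ / 2) (half_pos hδ)
  refine ⟨(fun b => min (b + δ / 2) 0) '' T, ?_, hfin.image _, fun s hs => ?_⟩
  · rintro _ ⟨b, hb, rfl⟩
    obtain ⟨hb₁, hb₂⟩ := hT hb
    exact ⟨lt_min (by linarith) (by linarith), min_le_right _ _⟩
  · obtain ⟨b, hb, hsb⟩ := mem_iUnion₂.1 (hcover hs)
    rw [Real.ball_eq_Ioo] at hsb
    refine mem_iUnion₂.2 ⟨_, mem_image_of_mem _ hb, ?_, lt_min hsb.2 hs.2⟩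
    linarith [min_le_left (b + δ / 2) 0, hsb.1]

theorem exists_finset_half_parabolicCylinder_subset_iUnion (n : ℕ) :
    ∃ F : Finset (EuclideanSpace ℝ (Fin n) × ℝ),
      parabolicCylinder n 0 0 (1 / 2) ⊆ ⋃ z : F, parabolicCylinder n z.1.1 z.1.2 (1 / 8) ∧
      ∀ z : F, parabolicCylinder n z.1.1 z.1.2 (1 / 2) ⊆ parabolicCylinder n 0 0 1 := by
  obtain ⟨X, hX, hXfin, hXcover⟩ := Metric.finite_approx_of_totallyBounded
    ((isCompact_closedBall (0 : EuclideanSpace ℝ (Fin n)) (1 / 2)).totallyBounded.subset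
      Metric.ball_subset_closedBall) (1 / 8) (by norm_num)
  obtain ⟨T, hT, hTfin, hTcover⟩ :=
    exists_finite_Ioo_subset_biUnion_Ioo ((1 / 2) ^ 2) (δ := (1 / 8) ^ 2) (by norm_num)
  refine ⟨(hXfin.prod hTfin).toFinset, ?_, fun ⟨z, hz⟩ => ?_⟩
  · rintro ⟨y, s⟩ ⟨hy, hs⟩
    obtain ⟨a, ha, hya⟩ := mem_iUnion₂.1 (hXcover hy)
    obtain ⟨b, hb, hsb⟩ := mem_iUnion₂.1 (hTcover (zero_sub ((1 / 2 : ℝ) ^ 2) ▸ hs))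
    exact mem_iUnion.2 ⟨⟨(a, b), (hXfin.prod hTfin).mem_toFinset.2 ⟨ha, hb⟩⟩, hya, hsb⟩
  · obtain ⟨hz₁, hz₂⟩ := (hXfin.prod hTfin).mem_toFinset.1 hz
    have hdist : dist z.1 0 < 1 / 2 := hX hz₁
    obtain ⟨hbot, htop⟩ := hT hz₂
    exact parabolicCylinder_subset_parabolicCylinder (by linarith) htop (by linarith)

theorem exists_nat_eLpNorm'_half_parabolicCylinder_le (n : ℕ) (ε : Type*) [TopologicalSpace ε]
    [ContinuousENorm ε] :
    ∃ N : ℕ, ∀ {g : EuclideanSpace ℝ (Fin n) × ℝ → ε} {e : ℝ} {M : ℝ≥0∞}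
      {x : EuclideanSpace ℝ (Fin n)} {t r : ℝ}, 0 < e → 0 < r →
      (∀ y s, parabolicCylinder n y s (r / 2) ⊆ parabolicCylinder n x t r →
        eLpNorm' g e volume[|parabolicCylinder n y s (r / 8)] ≤ M) →
      eLpNorm' g e volume[|parabolicCylinder n x t (r / 2)] ≤ (N : ℝ≥0∞) ^ (1 / e) * M := by
  obtain ⟨F, hcover, hsub⟩ := exists_finset_half_parabolicCylinder_subset_iUnion n
  refine ⟨Fintype.card F, fun {g e M x t r} he hr hM => ?_⟩
  have hcover' : parabolicCylinder n x t (r / 2) ⊆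
      ⋃ z : F, parabolicCylinder n (x + r • z.1.1) (r ^ 2 * z.1.2 + t) (r / 8) := by
    simpa only [image_iUnion, parabolicDilation_image_parabolicCylinder hr, smul_zero, add_zero,
      mul_zero, zero_add, mul_one_div] using image_mono (f := parabolicDilation x t r) hcover
  have hsub' (z : F) : parabolicCylinder n (x + r • z.1.1) (r ^ 2 * z.1.2 + t) (r / 2) ⊆
      parabolicCylinder n x t r := by
    simpa only [parabolicDilation_image_parabolicCylinder hr, smul_zero, add_zero, mul_zero,
      zero_add, mul_one_div, mul_one] using
      image_mono (f := parabolicDilation x t r) (hsub z)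
  refine eLpNorm'_cond_le_of_subset_iUnion he hcover' (fun z => ?_) fun z => hM _ _ (hsub' z)
  rw [volume_parabolicCylinder (by positivity), volume_parabolicCylinder (by positivity)]
  gcongr
  norm_num

end ParabolicCylinder

section ReverseHolder

variable {n : ℕ} {ε : Type*} [TopologicalSpace ε] [ContinuousENorm ε]
  {g : EuclideanSpace ℝ (Fin n) × ℝ → ε} {A : Set (EuclideanSpace ℝ (Fin n) × ℝ)}
  {C : ℝ≥0∞} {p q σ : ℝ} {x y : EuclideanSpace ℝ (Fin n)} {t s r k : ℝ}

/-- The reverse Hölder inequality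
`(⨍_{Q_{r/2}} |g|^q)^{1/q} ≤ C (⨍_{Q_r} |g|^p)^{1/p}` on all cylinders `Q_r ⊆ A`. Averages
are expressed as integrals against the normalised restriction `volume[|Q]`. -/
def ReverseHolderOn (g : EuclideanSpace ℝ (Fin n) × ℝ → ε) (p q : ℝ) (C : ℝ≥0∞)
    (A : Set (EuclideanSpace ℝ (Fin n) × ℝ)) : Prop :=
  ∀ (x : EuclideanSpace ℝ (Fin n)) (t r : ℝ), 0 < r → parabolicCylinder n x t r ⊆ A →
    eLpNorm' g q volume[|parabolicCylinder n x t (r / 2)] ≤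
      C * eLpNorm' g p volume[|parabolicCylinder n x t r]

/-- The supremum of `|Q_r|^{1/σ} (⨍_{Q_{r/2}} |g|^q)^{1/q}` over the cylinders `Q_r ⊆ A`. The
weight `|Q_r|^{1/σ}` is the one that turns `L^σ`-averages over `Q_r` into `L^σ`-norms. -/
noncomputable def weightedHalfSup (g : EuclideanSpace ℝ (Fin n) × ℝ → ε) (σ q : ℝ)
    (A : Set (EuclideanSpace ℝ (Fin n) × ℝ)) : ℝ≥0∞ :=
  ⨆ (x : EuclideanSpace ℝ (Fin n)) (t : ℝ) (r : ℝ) (_ : 0 < r)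
    (_ : parabolicCylinder n x t r ⊆ A),
    volume (parabolicCylinder n x t r) ^ (1 / σ) *
      eLpNorm' g q volume[|parabolicCylinder n x t (r / 2)]

theorem le_weightedHalfSup (hr : 0 < r) (hA : parabolicCylinder n x t r ⊆ A) :
    volume (parabolicCylinder n x t r) ^ (1 / σ) *
      eLpNorm' g q volume[|parabolicCylinder n x t (r / 2)] ≤ weightedHalfSup g σ q A :=
  le_iSup_of_le x <| le_iSup_of_le t <| le_iSup_of_le r <| le_iSup_of_le hr <|
    le_iSup_of_le hA le_rfl

theorem weightedHalfSup_le {M : ℝ≥0∞}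
    (h : ∀ x t r, 0 < r → parabolicCylinder n x t r ⊆ A →
      volume (parabolicCylinder n x t r) ^ (1 / σ) *
        eLpNorm' g q volume[|parabolicCylinder n x t (r / 2)] ≤ M) :
    weightedHalfSup g σ q A ≤ M :=
  iSup_le fun x => iSup_le fun t => iSup_le fun r => iSup_le fun hr => iSup_le (h x t r hr)

theorem volume_rpow_mul_eLpNorm'_cond_le (hσ : 0 < σ) (hk : 0 < k) (hr : 0 < r)
    (hA : parabolicCylinder n y s r ⊆ A) :
    volume (parabolicCylinder n x t (k * r)) ^ (1 / σ) *
        eLpNorm' g σ volume[|parabolicCylinder n y s r] ≤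
      ENNReal.ofReal (k ^ (n + 2)) ^ (1 / σ) * eLpNorm' g σ (volume.restrict A) := by
  rw [volume_parabolicCylinder_mul (y := y) (s := s) hk hr,
    ENNReal.mul_rpow_of_nonneg _ _ (by positivity), mul_assoc,
    rpow_measure_mul_eLpNorm'_cond hσ.le (volume_parabolicCylinder_ne_zero hr)
      volume_parabolicCylinder_ne_top]
  gcongr

theorem weightedHalfSup_ne_top (hσ : 0 < σ) (hσq : σ ≤ q) (hA : volume A ≠ ∞)
    (hg : eLpNorm' g q (volume.restrict A) ≠ ∞) : weightedHalfSup g σ q A ≠ ∞ := by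
  have hq : 0 < q := hσ.trans_le hσq
  have hexp : 0 ≤ 1 / σ - 1 / q := sub_nonneg.2 (one_div_le_one_div_of_le hσ hσq)
  refine ne_top_of_le_ne_top (b := volume A ^ (1 / σ - 1 / q) *
    (ENNReal.ofReal (2 ^ (n + 2)) ^ (1 / q) * eLpNorm' g q (volume.restrict A))) ?_
    (weightedHalfSup_le fun x t r hr hQA => ?_)
  · finiteness
  have hhalf : parabolicCylinder n x t (r / 2) ⊆ A :=
    (parabolicCylinder_subset_of_radius_le (by positivity) (by linarith)).trans hQA
  calc volume (parabolicCylinder n x t r) ^ (1 / σ) *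
        eLpNorm' g q volume[|parabolicCylinder n x t (r / 2)]
      = volume (parabolicCylinder n x t r) ^ (1 / σ - 1 / q) *
          (volume (parabolicCylinder n x t (2 * (r / 2))) ^ (1 / q) *
            eLpNorm' g q volume[|parabolicCylinder n x t (r / 2)]) := by
        rw [mul_div_cancel₀ r two_ne_zero, ← mul_assoc,
          ← ENNReal.rpow_add_of_nonneg _ _ hexp (by positivity), sub_add_cancel]
    _ ≤ _ := mul_le_mul' (ENNReal.rpow_le_rpow (measure_mono hQA) hexp)
        (volume_rpow_mul_eLpNorm'_cond_le hq two_pos (half_pos hr) hhalf)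

theorem ReverseHolderOn.mono (hRH : ReverseHolderOn g p q C A)
    {B : Set (EuclideanSpace ℝ (Fin n) × ℝ)} (hBA : B ⊆ A) : ReverseHolderOn g p q C B :=
  fun x t r hr hB => hRH x t r hr (hB.trans hBA)

theorem ReverseHolderOn.mono_left_exponent (hRH : ReverseHolderOn g p q C A)
    (hg : AEStronglyMeasurable g (volume.restrict A)) (hp : 0 < p) (hpσ : p ≤ σ) :
    ReverseHolderOn g σ q C A := by
  intro x t r hr hA
  have := ProbabilityTheory.cond_isProbabilityMeasure_of_finite
    (volume_parabolicCylinder_ne_zero (x := x) (t := t) hr) volume_parabolicCylinder_ne_top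
  refine (hRH x t r hr hA).trans ?_
  gcongr
  exact eLpNorm'_le_eLpNorm'_of_exponent_le hp hpσ _ (aestronglyMeasurable_cond_of_subset hg hA)

theorem volume_rpow_mul_eLpNorm'_quarter_le (hσ : 0 < σ) (hr : 0 < r)
    (hA : parabolicCylinder n y s (r / 2) ⊆ A) :
    volume (parabolicCylinder n x t r) ^ (1 / σ) *
        eLpNorm' g q volume[|parabolicCylinder n y s (r / 4)] ≤
      ENNReal.ofReal (4 ^ (n + 2)) ^ (1 / σ) * weightedHalfSup g σ q A := by
  have hsup := le_weightedHalfSup (g := g) (σ := σ) (q := q) (half_pos hr) hA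
  rw [div_div, show (2 : ℝ) * 2 = 4 by norm_num] at hsup
  have hV := volume_parabolicCylinder_mul (x := x) (y := y) (t := t) (s := s) four_pos (half_pos hr)
  calc volume (parabolicCylinder n x t r) ^ (1 / σ) *
        eLpNorm' g q volume[|parabolicCylinder n y s (r / 4)]
      ≤ volume (parabolicCylinder n x t (4 * (r / 2))) ^ (1 / σ) *
          eLpNorm' g q volume[|parabolicCylinder n y s (r / 4)] := by
        gcongr
        exact parabolicCylinder_subset_of_radius_le hr.le (by linarith)
    _ ≤ ENNReal.ofReal (4 ^ (n + 2)) ^ (1 / σ) * weightedHalfSup g σ q A := by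
        rw [hV, ENNReal.mul_rpow_of_nonneg _ _ (by positivity), mul_assoc]
        gcongr

theorem ReverseHolderOn.volume_rpow_mul_eLpNorm'_eighth_le {θ : ℝ}
    (hRH : ReverseHolderOn g p q C A) (hg : AEStronglyMeasurable g (volume.restrict A))
    (hσ : 0 < σ) (hp : 0 < p) (hq : 0 < q) (hθ : θ ∈ Icc 0 1)
    (hpθ : 1 / p = (1 - θ) / σ + θ / q) (hr : 0 < r)
    (hA : parabolicCylinder n y s (r / 2) ⊆ A) :
    volume (parabolicCylinder n x t r) ^ (1 / σ) *
        eLpNorm' g q volume[|parabolicCylinder n y s (r / 8)] ≤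
      C * ENNReal.ofReal (4 ^ (n + 2)) ^ (1 / σ) *
        (eLpNorm' g σ (volume.restrict A) ^ (1 - θ) * weightedHalfSup g σ q A ^ θ) := by
  have hquarter : parabolicCylinder n y s (r / 4) ⊆ A :=
    (parabolicCylinder_subset_of_radius_le (by positivity) (by linarith)).trans hA
  set V := volume (parabolicCylinder n x t r) ^ (1 / σ)
  set K := ENNReal.ofReal (4 ^ (n + 2)) ^ (1 / σ)
  set Nσ := eLpNorm' g σ volume[|parabolicCylinder n y s (r / 4)]
  set Nq := eLpNorm' g q volume[|parabolicCylinder n y s (r / 4)]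
  have hNσ : V * Nσ ≤ K * eLpNorm' g σ (volume.restrict A) := by
    simpa only [mul_div_cancel₀ r four_ne_zero] using
      volume_rpow_mul_eLpNorm'_cond_le (x := x) (t := t) (g := g) hσ four_pos
        (by positivity : 0 < r / 4) hquarter
  have hNq : V * Nq ≤ K * weightedHalfSup g σ q A :=
    volume_rpow_mul_eLpNorm'_quarter_le hσ hr hA
  have hreverse : eLpNorm' g q volume[|parabolicCylinder n y s (r / 8)] ≤
      C * (Nσ ^ (1 - θ) * Nq ^ θ) := by
    have h := hRH y s (r / 4) (by positivity) hquarter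
    rw [div_div, show (4 : ℝ) * 2 = 8 by norm_num] at h
    refine h.trans ?_
    gcongr
    exact eLpNorm'_le_eLpNorm'_rpow_mul_eLpNorm'_rpow hσ hp hq hθ hpθ
      (aestronglyMeasurable_cond_of_subset hg hquarter)
  have hθ' : 0 ≤ 1 - θ := sub_nonneg.2 hθ.2
  have hθ₀ : 0 ≤ θ := hθ.1
  calc V * eLpNorm' g q volume[|parabolicCylinder n y s (r / 8)]
      ≤ V * (C * (Nσ ^ (1 - θ) * Nq ^ θ)) := by gcongr
    _ = C * ((V * Nσ) ^ (1 - θ) * (V * Nq) ^ θ) := by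
        rw [mul_left_comm, mul_mul_rpow_one_sub_mul_rpow V _ _ hθ]
    _ ≤ C * ((K * eLpNorm' g σ (volume.restrict A)) ^ (1 - θ) *
          (K * weightedHalfSup g σ q A) ^ θ) := by gcongr
    _ = _ := by rw [← mul_mul_rpow_one_sub_mul_rpow K _ _ hθ, mul_assoc]

theorem exists_weightedHalfSup_le (n : ℕ) (ε : Type*) [TopologicalSpace ε]
    [ContinuousENorm ε] (hC : C ≠ ∞) (hσ : 0 < σ) (hσp : σ ≤ p) (hpq : p < q) :
    ∃ D : ℝ≥0∞, D ≠ ∞ ∧ ∀ {g : EuclideanSpace ℝ (Fin n) × ℝ → ε}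
      {A : Set (EuclideanSpace ℝ (Fin n) × ℝ)}, AEStronglyMeasurable g (volume.restrict A) →
      volume A ≠ ∞ → eLpNorm' g q (volume.restrict A) ≠ ∞ → ReverseHolderOn g p q C A →
      weightedHalfSup g σ q A ≤ D * eLpNorm' g σ (volume.restrict A) := by
  have hp : 0 < p := hσ.trans_le hσp
  have hq : 0 < q := hp.trans hpq
  obtain ⟨θ, ⟨hθ₀, hθ₁⟩, hpθ⟩ := exists_one_div_eq_one_sub_div_add_div hσ hσp hpq
  obtain ⟨N, hN⟩ := exists_nat_eLpNorm'_half_parabolicCylinder_le n ε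
  set K : ℝ≥0∞ := C * ENNReal.ofReal (4 ^ (n + 2)) ^ (1 / σ)
  refine ⟨((N : ℝ≥0∞) ^ (1 / q) * K) ^ (1 / (1 - θ)), ?_, fun {g A} hg hA hgq hRH => ?_⟩
  · have := sub_pos.2 hθ₁
    finiteness
  refine le_rpow_mul_of_le_mul_rpow_mul_rpow hθ₁
    (weightedHalfSup_ne_top hσ (hσp.trans hpq.le) hA hgq)
    (weightedHalfSup_le fun x t r hr hQA => ?_)
  set V := volume (parabolicCylinder n x t r) ^ (1 / σ)
  set B := eLpNorm' g σ (volume.restrict A) ^ (1 - θ) * weightedHalfSup g σ q A ^ θ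
  have hV₀ : V ≠ 0 := (ENNReal.rpow_pos (pos_iff_ne_zero.2 (volume_parabolicCylinder_ne_zero hr))
    volume_parabolicCylinder_ne_top).ne'
  have hV : V ≠ ∞ := ENNReal.rpow_ne_top_of_nonneg (by positivity) volume_parabolicCylinder_ne_top
  calc V * eLpNorm' g q volume[|parabolicCylinder n x t (r / 2)]
      ≤ V * ((N : ℝ≥0∞) ^ (1 / q) * (K * B / V)) := by
        gcongr
        refine hN hq hr fun y s hsub => ?_
        rw [ENNReal.le_div_iff_mul_le (.inl hV₀) (.inl hV), mul_comm]
        exact hRH.volume_rpow_mul_eLpNorm'_eighth_le hg hσ hp hq ⟨hθ₀, hθ₁.le⟩ hpθ hr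
          (hsub.trans hQA)
    _ = (N : ℝ≥0∞) ^ (1 / q) * K * eLpNorm' g σ (volume.restrict A) ^ (1 - θ) *
          weightedHalfSup g σ q A ^ θ := by
        rw [mul_left_comm, ENNReal.mul_div_cancel hV₀ hV]
        simp only [B, mul_assoc]

theorem exists_eLpNorm'_half_parabolicCylinder_le_of_reverseHolderOn (n : ℕ) (ε : Type*)
    [TopologicalSpace ε] [ContinuousENorm ε] (hC : C ≠ ∞) (hσ : 0 < σ) (hσp : σ ≤ p)
    (hpq : p < q) :
    ∃ D : ℝ≥0∞, D ≠ ∞ ∧ ∀ {g : EuclideanSpace ℝ (Fin n) × ℝ → ε} {x t r}, 0 < r →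
      AEStronglyMeasurable g (volume.restrict (parabolicCylinder n x t r)) →
      eLpNorm' g q (volume.restrict (parabolicCylinder n x t r)) ≠ ∞ →
      ReverseHolderOn g p q C (parabolicCylinder n x t r) →
      eLpNorm' g q volume[|parabolicCylinder n x t (r / 2)] ≤
        D * eLpNorm' g σ volume[|parabolicCylinder n x t r] := by
  obtain ⟨D, hD, hsup⟩ := exists_weightedHalfSup_le n ε hC hσ hσp hpq
  refine ⟨D, hD, fun {g x t r} hr hg hgq hRH => ?_⟩
  have hQ₀ : volume (parabolicCylinder n x t r) ≠ 0 := volume_parabolicCylinder_ne_zero hr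
  have hQ : volume (parabolicCylinder n x t r) ≠ ∞ := volume_parabolicCylinder_ne_top
  have key := (le_weightedHalfSup hr Subset.rfl).trans (hsup hg hQ hgq hRH)
  rw [← rpow_measure_mul_eLpNorm'_cond hσ.le hQ₀ hQ, mul_left_comm] at key
  exact (ENNReal.mul_le_mul_iff_right (ENNReal.rpow_pos (pos_iff_ne_zero.2 hQ₀) hQ).ne'
    (ENNReal.rpow_ne_top_of_nonneg (by positivity) hQ)).1 key

theorem eLpNorm'_cond_le_of_forall_dilatedParabolicCylinder {τ R S : ℝ} (hR : 0 < R) (hS : 0 < S)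
    (hτR : τ ∈ Icc 0 (R ^ 2)) (hτS : τ ∈ Icc 0 (S ^ 2)) (hC : C ≠ ∞)
    (h : ∀ k ∈ Ioo (0 : ℝ) 1, eLpNorm' g q volume[|dilatedParabolicCylinder x t τ k R] ≤
      C * eLpNorm' g p volume[|dilatedParabolicCylinder x t τ k S]) :
    eLpNorm' g q volume[|parabolicCylinder n x t R] ≤
      C * eLpNorm' g p volume[|parabolicCylinder n x t S] := by
  obtain ⟨k, hkmono, hk, hk₁⟩ := exists_seq_strictMono_tendsto' (zero_lt_one (α := ℝ))
  have hk' (j) : k j ∈ Icc (0 : ℝ) 1 := Ioo_subset_Icc_self (hk j)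
  have hlim {e L : ℝ} (hL : 0 < L) (hτ : τ ∈ Icc 0 (L ^ 2)) :
      Tendsto (fun j => eLpNorm' g e volume[|dilatedParabolicCylinder x t τ (k j) L]) atTop
        (𝓝 (eLpNorm' g e volume[|parabolicCylinder n x t L])) := by
    rw [← iUnion_dilatedParabolicCylinder hL.le hτ hk' hk₁]
    refine tendsto_eLpNorm'_cond_iUnion (fun i j hij =>
      dilatedParabolicCylinder_subset hL.le hτ (hk i).1.le (hkmono.monotone hij)) ?_ ?_ <;>
    rw [iUnion_dilatedParabolicCylinder hL.le hτ hk' hk₁]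
    exacts [volume_parabolicCylinder_ne_zero hL, volume_parabolicCylinder_ne_top]
  exact le_of_tendsto_of_tendsto' (hlim hR hτR)
    (ENNReal.Tendsto.const_mul (hlim hS hτS) (.inr hC)) fun j => h _ (hk j)

theorem ReverseHolderOn.self_improving (n : ℕ) (ε : Type*) [TopologicalSpace ε] [ContinuousENorm ε]
    (hC : C ≠ ∞) (hp : 0 < p) (hpq : p < q) (hσ : 0 < σ) :
    ∃ D : ℝ≥0∞, D ≠ ∞ ∧ ∀ {g : EuclideanSpace ℝ (Fin n) × ℝ → ε}
      {A : Set (EuclideanSpace ℝ (Fin n) × ℝ)}, AEStronglyMeasurable g (volume.restrict A) →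
      (∀ K ⊆ A, IsCompact K → eLpNorm' g q (volume.restrict K) ≠ ∞) →
      ReverseHolderOn g p q C A → ReverseHolderOn g σ q D A := by
  obtain hpσ | hσp := le_total p σ
  · exact ⟨C, hC, fun hg _ hRH => hRH.mono_left_exponent hg hp hpσ⟩
  obtain ⟨D, hD, hhalf⟩ :=
    exists_eLpNorm'_half_parabolicCylinder_le_of_reverseHolderOn n ε hC hσ hσp hpq
  refine ⟨D, hD, fun {g A} hg hcpt hRH x t r hr hA => ?_⟩
  have hr2 : 0 < r ^ 2 := by positivity
  -- `(x, t - r²/8)` is the centre of `Q_{r/2}`, so it lies inside both `Q_{r/2}` and `Q_r`.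
  refine eLpNorm'_cond_le_of_forall_dilatedParabolicCylinder (τ := r ^ 2 / 8) (half_pos hr) hr
    ⟨by positivity, by linarith⟩ ⟨by positivity, by linarith⟩ hD fun k hk => ?_
  obtain ⟨K, hK, hQK, hKQ⟩ := exists_isCompact_dilatedParabolicCylinder_subset (x := x) (t := t)
    (τ := r ^ 2 / 8) hr ⟨by positivity, by linarith⟩ hk
  have hKA : K ⊆ A := hKQ.trans hA
  rw [dilatedParabolicCylinder, ← mul_div_assoc k r 2]
  exact hhalf (mul_pos hk.1 hr) (hg.mono_set (hQK.trans hKA))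
    (ne_top_of_le_ne_top (hcpt K hKA hK)
      (eLpNorm'_mono_measure g (Measure.restrict_mono_set _ hQK) (hp.trans hpq).le))
    (hRH.mono (hQK.trans hKA))

end ReverseHolder

section CylAvg

variable {n : ℕ} {A Q : Set (EuclideanSpace ℝ (Fin n) × ℝ)}
  {g : EuclideanSpace ℝ (Fin n) × ℝ → ℝ} {e p χ C : ℝ}

theorem cylAvg_rpow_one_div_eq_eLpNorm' (he : 0 ≤ e) :
    cylAvg Q g e ^ (1 / e) = eLpNorm' g e volume[|Q] := by
  rw [cylAvg, lintegral_ofReal_abs_rpow_eq _ he, eLpNorm'_eq_lintegral_enorm,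
    ProbabilityTheory.cond, lintegral_smul_measure, smul_eq_mul]

theorem reverseHolderOn_of_cylAvg_le (hp : 0 < p) (hχ : 0 < χ)
    (h : ∀ x t r, 0 < r → parabolicCylinder n x t r ⊆ A →
      cylAvg (parabolicCylinder n x t (r / 2)) g (p * χ) ^ (1 / χ) ≤
        ENNReal.ofReal C * cylAvg (parabolicCylinder n x t r) g p) :
    ReverseHolderOn g p (p * χ) (ENNReal.ofReal C ^ (1 / p)) A := by
  intro x t r hr hA
  rw [← cylAvg_rpow_one_div_eq_eLpNorm' hp.le, ← cylAvg_rpow_one_div_eq_eLpNorm' (by positivity),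
    ← ENNReal.mul_rpow_of_nonneg _ _ (by positivity), mul_comm p χ, ← one_div_mul_one_div,
    ENNReal.rpow_mul, mul_comm χ p]
  gcongr
  exact h x t r hr hA

end CylAvg

theorem reverse_holder_self_improving_general (n : ℕ) {p χ σ : ℝ} (C : ℝ) (hp : 0 < p)
    (hχ : 1 < χ) (hσ : 0 < σ) :
    ∃ c : ℝ, 0 < c ∧
      ∀ A : Set (EuclideanSpace ℝ (Fin n) × ℝ),
      ∀ g : EuclideanSpace ℝ (Fin n) × ℝ → ℝ, AEMeasurable g (volume.restrict A) →
        LocallyIntegrableOn (fun z => |g z| ^ (p * χ)) A volume →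
        (∀ (x : EuclideanSpace ℝ (Fin n)) (t ρ : ℝ), 0 < ρ →
          parabolicCylinder n x t ρ ⊆ A →
            cylAvg (parabolicCylinder n x t (ρ / 2)) g (p * χ) ^ (1 / χ) ≤
              ENNReal.ofReal C * cylAvg (parabolicCylinder n x t ρ) g p) →
        ∀ (x : EuclideanSpace ℝ (Fin n)) (t ρ : ℝ), 0 < ρ →
          parabolicCylinder n x t ρ ⊆ A →
            cylAvg (parabolicCylinder n x t (ρ / 2)) g (p * χ) ^ (1 / (p * χ)) ≤
              ENNReal.ofReal c * cylAvg (parabolicCylinder n x t ρ) g σ ^ (1 / σ) := by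
  have hpχ : 0 ≤ p * χ := by positivity
  have hC : ENNReal.ofReal C ^ (1 / p) ≠ ∞ :=
    ENNReal.rpow_ne_top_of_nonneg (by positivity) ENNReal.ofReal_ne_top
  obtain ⟨D, hD, himprove⟩ :=
    ReverseHolderOn.self_improving n ℝ hC hp (lt_mul_of_one_lt_right hp hχ) hσ
  refine ⟨D.toReal + 1, by positivity, fun A g hg hint hRH x t ρ hρ hQ => ?_⟩
  rw [cylAvg_rpow_one_div_eq_eLpNorm' hpχ, cylAvg_rpow_one_div_eq_eLpNorm' hσ.le]
  refine (himprove hg.aestronglyMeasurable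
    (fun K hKA hK => eLpNorm'_restrict_ne_top_of_isCompact hpχ hint hKA hK)
    (reverseHolderOn_of_cylAvg_le hp (one_pos.trans hχ) hRH) x t ρ hρ hQ).trans ?_
  gcongr
  exact ENNReal.le_ofReal_iff_toReal_le hD (by positivity) |>.2 (by linarith)

/-- **self-improving property of reverse Hölder inequalities.** If `g` is
measurable on an open `A ⊆ ℝ^{n+1}` with `|g|^{2χ₁}` locally integrable, `χ₁ > 1`, `cHat ≥ 1`,
and `(⨍_{Q_{ρ/2}} |g|^{2χ₁})^{1/χ₁} ≤ cHat ⨍_{Q_ρ} |g|²` for all parabolic cylinders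
`Q_ρ ⊆ A`, then for every `σ ∈ (0,2]` there is `c = c(n,σ,χ₁,cHat)` such that
`(⨍_{Q_{ρ/2}} |g|^{2χ₁})^{1/(2χ₁)} ≤ c (⨍_{Q_ρ} |g|^σ)^{1/σ}` for all parabolic cylinders
`Q_ρ ⊆ A`. -/
theorem reverse_holder_self_improving (n : ℕ) (hn : 2 ≤ n) (χ₁ cHat σ : ℝ)
    (hχ : 1 < χ₁) (hcHat : 1 ≤ cHat) (hσ0 : 0 < σ) (hσ2 : σ ≤ 2) :
    ∃ c : ℝ, 0 < c ∧
      ∀ A : Set (EuclideanSpace ℝ (Fin n) × ℝ), IsOpen A →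
      ∀ g : EuclideanSpace ℝ (Fin n) × ℝ → ℝ, Measurable g →
        LocallyIntegrableOn (fun p => |g p| ^ (2 * χ₁)) A volume →
        (∀ (x : EuclideanSpace ℝ (Fin n)) (t ρ : ℝ), 0 < ρ →
          parabolicCylinder n x t ρ ⊆ A →
            cylAvg (parabolicCylinder n x t (ρ / 2)) g (2 * χ₁) ^ (1 / χ₁) ≤
              ENNReal.ofReal cHat * cylAvg (parabolicCylinder n x t ρ) g 2) →
        ∀ (x : EuclideanSpace ℝ (Fin n)) (t ρ : ℝ), 0 < ρ →
          parabolicCylinder n x t ρ ⊆ A →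
            cylAvg (parabolicCylinder n x t (ρ / 2)) g (2 * χ₁) ^ (1 / (2 * χ₁)) ≤
              ENNReal.ofReal c * cylAvg (parabolicCylinder n x t ρ) g σ ^ (1 / σ) := by
  obtain ⟨c, hc, h⟩ := reverse_holder_self_improving_general n cHat two_pos hχ hσ0
  exact ⟨c, hc, fun A _ g hg => h A g hg.aemeasurable⟩
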